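/- (Step in the proof of Proposition 3.1: representing morphisms in the derived category by monomorphisms of complexes of injectives) Let 𝒜 be an abelian category with enough injectives. Then every morphism φ : K → L in the bounded-below derived category D⁺(𝒜) can be represented by a degreewise monomorphism of complexes of injectives: there exist bounded-below cochain complexes I and J whose components are injective objects of 𝒜, a morphism of complexes f : I → J which is a monomorphism in every degree, and isomorphisms α : K ≅ I and β : L ≅ J in D⁺(𝒜) such that β ∘ φ = Q(f) ∘ α, where Q denotes the localization functor from complexes to D⁺(𝒜). -/

import Mathlib

open CategoryTheory CategoryTheory.Limits

/-!
Replacing source and target by injective resolutions turns `φ` into a morphism `Q I ⟶ Q L` with `L`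
bounded below and injective, hence K-injective, so `φ = Q g` for a genuine morphism of complexes
`g`. Then `g` factors as a monomorphism `f : I ⟶ J` followed by a quasi-isomorphism `p : J ⟶ L`
which is degreewise an epimorphism with injective kernel, so that `J` is again injective, and
`f` represents `φ` since `Q p` is invertible.
-/

section Abelian

open scoped ZeroObject

variable {C : Type*} [Category* C] [Abelian C]

theorem injective_of_epiWithInjectiveKernel {X Y : C} {p : X ⟶ Y}
    (hp : Abelian.epiWithInjectiveKernel p) [hY : Injective Y] : Injective X := by
  have hY₀ : Abelian.epiWithInjectiveKernel (0 : Y ⟶ 0) :=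
    (Abelian.epiWithInjectiveKernel_iff_of_isZero _ (isZero_zero C)).2 hY
  exact (Abelian.epiWithInjectiveKernel_iff_of_isZero _ (isZero_zero C)).1
    (MorphismProperty.comp_mem _ _ _ hp hY₀)

-- `J` is `L` plus the cone of an identity morphism, and this cone starts one degree below `K`:
-- hence the bound `a - 1`.
theorem exists_mono_quasiIso_injective_fac [EnoughInjectives C] {K L : CochainComplex C ℤ}
    (g : K ⟶ L) (a b : ℤ) [K.IsStrictlyGE a] [L.IsStrictlyGE b] [∀ i, Injective (L.X i)] :
    ∃ (J : CochainComplex C ℤ) (f : K ⟶ J) (p : J ⟶ L),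
      J.IsStrictlyGE (min (a - 1) b) ∧ (∀ i, Injective (J.X i)) ∧ Mono f ∧ QuasiIso p ∧
        f ≫ p = g := by
  have : K.IsStrictlyGE (min (a - 1) b + 1) := K.isStrictlyGE_of_ge _ a (by lia)
  have : L.IsStrictlyGE (min (a - 1) b) := L.isStrictlyGE_of_ge _ b (by lia)
  obtain ⟨J, hJ, f, p, hf, hp, hp', fac⟩ := CochainComplex.cm5b g (min (a - 1) b)
  exact ⟨J, f, p, hJ, fun i ↦ injective_of_epiWithInjectiveKernel (hp i), hf, hp', fac⟩

end Abelian

section DerivedCategory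

open DerivedCategory

variable {C : Type*} [Category* C] [Abelian C] [HasDerivedCategory C]

theorem Q_map_surjective_of_isKInjective (K L : CochainComplex C ℤ) [L.IsKInjective] :
    Function.Surjective (Q.map : (K ⟶ L) → (Q.obj K ⟶ Q.obj L)) := by
  intro φ
  obtain ⟨γ, hγ⟩ := (CochainComplex.IsKInjective.Qh_map_bijective _ L).surjective
    ((quotientCompQhIso C).hom.app K ≫ φ ≫ (quotientCompQhIso C).inv.app L)
  obtain ⟨g, rfl⟩ := (HomotopyCategory.quotient _ _).map_surjective γ
  refine ⟨g, ?_⟩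
  rw [← cancel_epi ((quotientCompQhIso C).hom.app K), ← quotientCompQhIso_hom_naturality, hγ]
  simp

theorem plus_Q_obj {K : CochainComplex C ℤ} (hK : ∃ n : ℤ, ∀ i < n, IsZero (K.X i)) :
    TStructure.t.plus (Q.obj K) := by
  obtain ⟨n, hn⟩ := hK
  have : K.IsStrictlyGE n := (K.isStrictlyGE_iff n).2 hn
  exact ⟨n, inferInstance⟩

variable [EnoughInjectives C]

theorem exists_iso_Q_obj_injective (X : DerivedCategory C) (n : ℤ) [X.IsGE n] :
    ∃ I : CochainComplex C ℤ,
      I.IsStrictlyGE n ∧ (∀ i, Injective (I.X i)) ∧ Nonempty (X ≅ Q.obj I) := by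
  obtain ⟨K, _, ⟨e⟩⟩ := exists_iso_Q_obj_of_isGE X n
  obtain ⟨I, r, _, hI, hI'⟩ :=
    CochainComplex.Plus.modelCategoryQuillen.exists_quasiIso_injective K n
  exact ⟨I, hI', hI, ⟨e ≪≫ asIso (Q.map r)⟩⟩

theorem exists_mono_comp_iso_eq_Q_map {K L : CochainComplex C ℤ} (a b : ℤ)
    [K.IsStrictlyGE a] [L.IsStrictlyGE b] [∀ i, Injective (L.X i)] (φ : Q.obj K ⟶ Q.obj L) :
    ∃ (J : CochainComplex C ℤ) (f : K ⟶ J) (e : Q.obj L ≅ Q.obj J),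
      J.IsStrictlyGE (min (a - 1) b) ∧ (∀ i, Injective (J.X i)) ∧ Mono f ∧
        φ ≫ e.hom = Q.map f := by
  have : L.IsKInjective := CochainComplex.isKInjective_of_injective L b
  obtain ⟨g, rfl⟩ := Q_map_surjective_of_isKInjective K L φ
  obtain ⟨J, f, p, hJ, hJ', hf, _, rfl⟩ := exists_mono_quasiIso_injective_fac g a b
  exact ⟨J, f, (asIso (Q.map p)).symm, hJ, hJ', hf, by simp⟩

theorem derivedCategory_hom_rep_mono_injectives_general {X Y : DerivedCategory C}
    (hX : TStructure.t.plus X) (hY : TStructure.t.plus Y) (φ : X ⟶ Y) :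
    ∃ (I J : CochainComplex C ℤ) (f : I ⟶ J),
      (∃ n : ℤ, ∀ i < n, IsZero (I.X i)) ∧ (∀ i : ℤ, Injective (I.X i)) ∧
      (∃ n : ℤ, ∀ i < n, IsZero (J.X i)) ∧ (∀ i : ℤ, Injective (J.X i)) ∧
      (∀ i : ℤ, Mono (f.f i)) ∧
      ∃ (α : X ≅ Q.obj I) (β : Y ≅ Q.obj J), φ ≫ β.hom = α.hom ≫ Q.map f := by
  obtain ⟨a, _⟩ := hX
  obtain ⟨b, _⟩ := hY
  obtain ⟨I, _, hI, ⟨α⟩⟩ := exists_iso_Q_obj_injective X a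
  obtain ⟨L, _, _, ⟨β⟩⟩ := exists_iso_Q_obj_injective Y b
  obtain ⟨J, f, e, _, hJ, _, he⟩ := exists_mono_comp_iso_eq_Q_map a b (α.inv ≫ φ ≫ β.hom)
  refine ⟨I, J, f, ⟨a, fun i hi ↦ I.isZero_of_isStrictlyGE a i hi⟩, hI,
    ⟨min (a - 1) b, fun i hi ↦ J.isZero_of_isStrictlyGE _ i hi⟩, hJ, fun i ↦ inferInstance,
    α, β ≪≫ e, ?_⟩
  simp [← he]

end DerivedCategory

/-- (Step in the proof of Proposition 3.1: representing morphisms in the derived category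
by monomorphisms of complexes of injectives.)  Let `𝒜` be an abelian category with enough
injectives.  Every morphism `φ : K ⟶ L` in the derived category between bounded-below
complexes can be represented by a degreewise monomorphism of bounded-below complexes of
injectives: there exist bounded-below cochain complexes `I` and `J` with injective
components, a morphism of complexes `f : I ⟶ J` which is a monomorphism in every degree,
and isomorphisms `α : Q K ≅ Q I`, `β : Q L ≅ Q J` in the derived category such that
`φ ≫ β = α ≫ Q f`. -/
theorem derivedCategory_hom_rep_mono_injectives {C : Type*} [Category C] [Abelian C]
    [EnoughInjectives C] [HasDerivedCategory C]
    (K L : CochainComplex C ℤ)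
    (hK : ∃ n : ℤ, ∀ i < n, IsZero (K.X i)) (hL : ∃ n : ℤ, ∀ i < n, IsZero (L.X i))
    (φ : DerivedCategory.Q.obj K ⟶ DerivedCategory.Q.obj L) :
    ∃ (I J : CochainComplex C ℤ) (f : I ⟶ J),
      (∃ n : ℤ, ∀ i < n, IsZero (I.X i)) ∧ (∀ i : ℤ, Injective (I.X i)) ∧
      (∃ n : ℤ, ∀ i < n, IsZero (J.X i)) ∧ (∀ i : ℤ, Injective (J.X i)) ∧
      (∀ i : ℤ, Mono (f.f i)) ∧
      ∃ (α : DerivedCategory.Q.obj K ≅ DerivedCategory.Q.obj I)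
        (β : DerivedCategory.Q.obj L ≅ DerivedCategory.Q.obj J),
        φ ≫ β.hom = α.hom ≫ DerivedCategory.Q.map f :=
  derivedCategory_hom_rep_mono_injectives_general (plus_Q_obj hK) (plus_Q_obj hL) φ
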